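/- Let θ₀, θ₁ ∈ ℝ, set H_γ = [[cos θ_γ, sin θ_γ], [sin θ_γ, −cos θ_γ]] for γ = 0,1, R(k) = [[e^{ik}, 0],[0, e^{−ik}]], Ĥ_γ(k) = R(k) H_γ, and λ_j(k) = cos θ₀ cos θ₁ cos 2k + sin θ₀ sin θ₁ + (−1)^j · i · √(1 − (cos θ₀ cos θ₁ cos 2k + sin θ₀ sin θ₁)²) for j = 0,1. Then the vector v_j(k) = ᵀ( sin θ₀ cos θ₁ e^{2ik} − cos θ₀ sin θ₁ , i·(−cos θ₀ cos θ₁ sin 2k + (−1)^j √(1 − (cos θ₀ cos θ₁ cos 2k + sin θ₀ sin θ₁)²)) ) satisfies the eigenvector equation Ĥ₁(k) Ĥ₀(k) v_j(k) = λ_j(k) v_j(k). -/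

import Mathlib

open MeasureTheory Complex Filter

noncomputable section

/-- The Konno density function `f_K(x; a)`; only `|a|` matters. -/
def konnoDensity (a x : ℝ) : ℝ :=
  if |x| < |a| then
    Real.sqrt (1 - |a| ^ 2) / (Real.pi * (1 - x ^ 2) * Real.sqrt (|a| ^ 2 - x ^ 2))
  else 0

/-- Time evolution of a time-dependent discrete-time quantum walk on `ℤ`:
`ψ_{t+1}(x) = P_t ψ_t(x+1) + Q_t ψ_t(x-1)`, where `P_t`/`Q_t` are the top/bottom
row parts of the coin `U t`. -/
def QWEvolves (U : ℕ → Matrix (Fin 2) (Fin 2) ℂ) (ψ : ℕ → ℤ → Fin 2 → ℂ) : Prop :=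
  ∀ t : ℕ, ∀ x : ℤ,
    ψ (t + 1) x 0 = U t 0 0 * ψ t (x + 1) 0 + U t 0 1 * ψ t (x + 1) 1 ∧
    ψ (t + 1) x 1 = U t 1 0 * ψ t (x - 1) 0 + U t 1 1 * ψ t (x - 1) 1

/-- Initial state `ψ₀(0) = ᵀ(α, β)`, `ψ₀(x) = 0` for `x ≠ 0`. -/
def QWInit (α β : ℂ) (ψ : ℕ → ℤ → Fin 2 → ℂ) : Prop :=
  ψ 0 0 0 = α ∧ ψ 0 0 1 = β ∧ ∀ x : ℤ, x ≠ 0 → (ψ 0 x 0 = 0 ∧ ψ 0 x 1 = 0)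

/-- `P(X_t = x) = ‖ψ_t(x)‖²`. -/
def qwProb (ψ : ℕ → ℤ → Fin 2 → ℂ) (t : ℕ) (x : ℤ) : ℝ :=
  Complex.normSq (ψ t x 0) + Complex.normSq (ψ t x 1)

/-- The law of `X_t / t`: `μ_t = Σ_{x ∈ ℤ} P(X_t = x) δ_{x/t}`. -/
def qwMeasure (ψ : ℕ → ℤ → Fin 2 → ℂ) (t : ℕ) : Measure ℝ :=
  Measure.sum fun x : ℤ => ENNReal.ofReal (qwProb ψ t x) • Measure.dirac ((x : ℝ) / (t : ℝ))

/-- Weak convergence of `X_t / t` to the law with density `f`. -/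
def qwWeakLimit (ψ : ℕ → ℤ → Fin 2 → ℂ) (f : ℝ → ℝ) : Prop :=
  ∀ g : BoundedContinuousFunction ℝ ℝ,
    Tendsto (fun t : ℕ => ∫ y, g y ∂ qwMeasure ψ t) atTop (nhds (∫ y, g y * f y))

/-- `R(k) = diag(e^{ik}, e^{-ik})`. -/
def Rmat (k : ℝ) : Matrix (Fin 2) (Fin 2) ℂ :=
  !![Complex.exp (Complex.I * k), 0; 0, Complex.exp (-(Complex.I * k))]

/-- `H_γ = [[cos θ, sin θ], [sin θ, -cos θ]]` as a complex matrix. -/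
def Hcoin (θ : ℝ) : Matrix (Fin 2) (Fin 2) ℂ :=
  !![(Real.cos θ : ℂ), (Real.sin θ : ℂ); (Real.sin θ : ℂ), (-(Real.cos θ) : ℂ)]

/-- `p = cos θ₀ cos θ₁ cos 2k + sin θ₀ sin θ₁`. -/
def eigP (θ₀ θ₁ k : ℝ) : ℝ :=
  Real.cos θ₀ * Real.cos θ₁ * Real.cos (2 * k) + Real.sin θ₀ * Real.sin θ₁

/-- If `μ` is a root of the characteristic polynomial of a `2 × 2` matrix `M`, then
`(M₀₁, μ - M₀₀)` satisfies the eigenvector equation of `M` for `μ`. -/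
theorem Matrix.mulVec_fin_two_eq_smul_of_charpoly_root {R : Type*} [CommRing R]
    (M : Matrix (Fin 2) (Fin 2) R) {μ : R} (h : μ ^ 2 - M.trace * μ + M.det = 0) :
    M.mulVec ![M 0 1, μ - M 0 0] = μ • ![M 0 1, μ - M 0 0] := by
  rw [Matrix.trace_fin_two, Matrix.det_fin_two] at h
  ext i
  fin_cases i
  · simp [Matrix.mulVec, dotProduct, Fin.sum_univ_two]
    ring
  · simp [Matrix.mulVec, dotProduct, Fin.sum_univ_two]
    linear_combination -h

theorem eigP_sq_le_one (θ₀ θ₁ k : ℝ) : eigP θ₀ θ₁ k ^ 2 ≤ 1 := by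
  have h₀ := Real.sin_sq_add_cos_sq θ₀
  have h₁ := Real.sin_sq_add_cos_sq θ₁
  have hk := Real.sin_sq_add_cos_sq (2 * k)
  have cauchy_schwarz : eigP θ₀ θ₁ k ^ 2 ≤
      (Real.cos θ₀ ^ 2 + Real.sin θ₀ ^ 2) *
        ((Real.cos θ₁ * Real.cos (2 * k)) ^ 2 + Real.sin θ₁ ^ 2) := by
    unfold eigP
    linarith [sq_nonneg (Real.cos θ₀ * Real.sin θ₁ -
      Real.sin θ₀ * (Real.cos θ₁ * Real.cos (2 * k)))]
  rw [add_comm (Real.cos θ₀ ^ 2), h₀, one_mul] at cauchy_schwarz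
  nlinarith [sq_nonneg (Real.cos θ₁ * Real.sin (2 * k))]

theorem det_Rmat (k : ℝ) : (Rmat k).det = 1 := by
  simp [Rmat, Matrix.det_fin_two, ← Complex.exp_add]

theorem det_Hcoin (θ : ℝ) : (Hcoin θ).det = -1 := by
  simp only [Hcoin, Matrix.det_fin_two_of]
  push_cast
  linear_combination -Complex.sin_sq_add_cos_sq (θ : ℂ)

theorem Rmat_mul_Hcoin_mul (θ₀ θ₁ k : ℝ) :
    (Rmat k * Hcoin θ₁) * (Rmat k * Hcoin θ₀) =
      !![(Real.cos θ₀ * Real.cos θ₁ : ℂ) * Complex.exp (2 * Complex.I * k) +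
          Real.sin θ₀ * Real.sin θ₁,
        (Real.sin θ₀ * Real.cos θ₁ : ℂ) * Complex.exp (2 * Complex.I * k) -
          Real.cos θ₀ * Real.sin θ₁;
        (Real.cos θ₀ * Real.sin θ₁ : ℂ) -
          Real.sin θ₀ * Real.cos θ₁ * Complex.exp (-(2 * Complex.I * k)),
        (Real.cos θ₀ * Real.cos θ₁ : ℂ) * Complex.exp (-(2 * Complex.I * k)) +
          Real.sin θ₀ * Real.sin θ₁] := by
  have hpos : Complex.exp (2 * Complex.I * k) =
      Complex.exp (Complex.I * k) * Complex.exp (Complex.I * k) := by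
    rw [← Complex.exp_add]; ring_nf
  have hneg : Complex.exp (-(2 * Complex.I * k)) =
      Complex.exp (-(Complex.I * k)) * Complex.exp (-(Complex.I * k)) := by
    rw [← Complex.exp_add]; ring_nf
  have hinv : Complex.exp (Complex.I * k) * Complex.exp (-(Complex.I * k)) = 1 := by
    rw [← Complex.exp_add, add_neg_cancel, Complex.exp_zero]
  rw [hpos, hneg]
  simp only [Rmat, Hcoin]
  generalize Complex.exp (Complex.I * k) = e at *
  generalize Complex.exp (-(Complex.I * k)) = f at *
  ext a b
  fin_cases a <;> fin_cases b <;>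
    simp only [Matrix.mul_fin_two, Matrix.of_apply, Matrix.cons_val', Matrix.cons_val_zero,
      Matrix.cons_val_one, Matrix.cons_val_fin_one, Fin.zero_eta, Fin.mk_one]
  · linear_combination (Real.sin θ₀ * Real.sin θ₁ : ℂ) * hinv
  · linear_combination -(Real.cos θ₀ * Real.sin θ₁ : ℂ) * hinv
  · linear_combination (Real.cos θ₀ * Real.sin θ₁ : ℂ) * hinv
  · linear_combination (Real.sin θ₀ * Real.sin θ₁ : ℂ) * hinv

/-- The vector `v_j(k)` satisfies the eigenvector equation
`Ĥ₁(k)Ĥ₀(k) v_j(k) = λ_j(k) v_j(k)` for `j = 0, 1`. -/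
theorem two_period_QW_eigenvectors (θ₀ θ₁ k : ℝ) (j : Fin 2) :
    ((Rmat k * Hcoin θ₁) * (Rmat k * Hcoin θ₀)).mulVec
      ![(Real.sin θ₀ * Real.cos θ₁ : ℂ) * Complex.exp (2 * Complex.I * k) -
          (Real.cos θ₀ * Real.sin θ₁ : ℂ),
        Complex.I * ((-(Real.cos θ₀ * Real.cos θ₁ * Real.sin (2 * k)) +
          (-1 : ℝ) ^ (j : ℕ) * Real.sqrt (1 - eigP θ₀ θ₁ k ^ 2) : ℝ) : ℂ)] =
    ((eigP θ₀ θ₁ k : ℂ) +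
        (-1 : ℂ) ^ (j : ℕ) * Complex.I * (Real.sqrt (1 - eigP θ₀ θ₁ k ^ 2) : ℂ)) •
      ![(Real.sin θ₀ * Real.cos θ₁ : ℂ) * Complex.exp (2 * Complex.I * k) -
          (Real.cos θ₀ * Real.sin θ₁ : ℂ),
        Complex.I * ((-(Real.cos θ₀ * Real.cos θ₁ * Real.sin (2 * k)) +
          (-1 : ℝ) ^ (j : ℕ) * Real.sqrt (1 - eigP θ₀ θ₁ k ^ 2) : ℝ) : ℂ)] := by
  have hexp : Complex.exp (2 * Complex.I * k) =
      Real.cos (2 * k) + Real.sin (2 * k) * Complex.I := by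
    rw [Complex.ofReal_cos, Complex.ofReal_sin, ← Complex.exp_mul_I]
    push_cast
    ring_nf
  have hexp_neg : Complex.exp (-(2 * Complex.I * k)) =
      Real.cos (2 * k) - Real.sin (2 * k) * Complex.I := by
    rw [show -(2 * Complex.I * (k : ℂ)) = ((-(2 * k) : ℝ) : ℂ) * Complex.I by push_cast; ring,
      Complex.exp_mul_I, ← Complex.ofReal_cos, ← Complex.ofReal_sin, Real.cos_neg, Real.sin_neg,
      Complex.ofReal_neg]
    ring
  have hsqrt : (Real.sqrt (1 - eigP θ₀ θ₁ k ^ 2) : ℂ) ^ 2 = 1 - (eigP θ₀ θ₁ k : ℂ) ^ 2 := by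
    exact_mod_cast Real.sq_sqrt (sub_nonneg.2 (eigP_sq_le_one θ₀ θ₁ k))
  have hsign : ((-1 : ℂ) ^ (j : ℕ)) ^ 2 = 1 := by
    rw [← pow_mul, mul_comm, pow_mul]; simp
  have heigP : (eigP θ₀ θ₁ k : ℂ) = Real.cos θ₀ * Real.cos θ₁ * Real.cos (2 * k) +
      Real.sin θ₀ * Real.sin θ₁ := by
    simp only [eigP, Complex.ofReal_add, Complex.ofReal_mul]
  set M := (Rmat k * Hcoin θ₁) * (Rmat k * Hcoin θ₀) with hM
  have hdet : M.det = 1 := by simp [hM, Matrix.det_mul, det_Rmat, det_Hcoin]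
  rw [Rmat_mul_Hcoin_mul] at hM
  have htrace : M.trace = 2 * (eigP θ₀ θ₁ k : ℂ) := by
    rw [hM, Matrix.trace_fin_two_of, hexp, hexp_neg, heigP]
    ring
  have key := M.mulVec_fin_two_eq_smul_of_charpoly_root (μ := (eigP θ₀ θ₁ k : ℂ) +
      (-1 : ℂ) ^ (j : ℕ) * Complex.I * (Real.sqrt (1 - eigP θ₀ θ₁ k ^ 2) : ℂ)) (by
    rw [hdet, htrace]
    linear_combination (((-1 : ℂ) ^ (j : ℕ)) ^ 2 * Real.sqrt (1 - eigP θ₀ θ₁ k ^ 2) ^ 2) *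
      Complex.I_sq - Real.sqrt (1 - eigP θ₀ θ₁ k ^ 2) ^ 2 * hsign - hsqrt)
  have h01 : M 0 1 = (Real.sin θ₀ * Real.cos θ₁ : ℂ) * Complex.exp (2 * Complex.I * k) -
      (Real.cos θ₀ * Real.sin θ₁ : ℂ) := by
    simp [hM]
  have h00 : (eigP θ₀ θ₁ k : ℂ) +
        (-1 : ℂ) ^ (j : ℕ) * Complex.I * (Real.sqrt (1 - eigP θ₀ θ₁ k ^ 2) : ℂ) - M 0 0 =
      Complex.I * ((-(Real.cos θ₀ * Real.cos θ₁ * Real.sin (2 * k)) +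
        (-1 : ℝ) ^ (j : ℕ) * Real.sqrt (1 - eigP θ₀ θ₁ k ^ 2) : ℝ) : ℂ) := by
    have h : M 0 0 = (Real.cos θ₀ * Real.cos θ₁ : ℂ) * Complex.exp (2 * Complex.I * k) +
        Real.sin θ₀ * Real.sin θ₁ := by
      simp [hM]
    rw [h, hexp, heigP]
    simp only [Complex.ofReal_add, Complex.ofReal_neg, Complex.ofReal_mul, Complex.ofReal_pow,
      Complex.ofReal_one]
    ring
  rwa [h00, h01] at key
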